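/- The function F_N(v) = (Σ_{i=1}^N |v_i|^N) · 2^{N−1} / N^{(N+2)/2} is a probability density on S^{N−1}(√N) with respect to the uniform probability measure, i.e., ∫_{S^{N−1}(√N)} F_N dσ^N = 1, and it is symmetric under permutations of the coordinates. -/

import Mathlib

open MeasureTheory Filter Topology

/-- The uniform (normalized Hausdorff) probability measure on the sphere of radius `r`
in `ℝ^N`. -/
noncomputable def uniformSphere (N : ℕ) (r : ℝ) : Measure (EuclideanSpace ℝ (Fin N)) :=
  ((μH[(N : ℝ) - 1]) (Metric.sphere (0 : EuclideanSpace ℝ (Fin N)) r))⁻¹ •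
    ((μH[(N : ℝ) - 1]).restrict (Metric.sphere (0 : EuclideanSpace ℝ (Fin N)) r))

/-!
Integrating `|⟪x, v⟫| ^ p` over `μ × ν` in the two possible orders shows that the ratio of
`∫ |⟪e, v⟫| ^ p` to `∫ ‖v‖ ^ p` (with `‖e‖ = 1`) is the same for all rotation-invariant measures.
For the Gaussian weight both integrals are explicit: one is a product of one-dimensional integrals,
the other is radial. When `p` is the dimension, Legendre's duplication formula collapses the
resulting Gamma factors to a power of `2`. The measure `uniformSphere` is genuinely normalised: the
sphere projects onto a disc by a `1`-Lipschitz map, so its Hausdorff measure is positive, and two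
hemispheres, each in a Lipschitz image of a disc under inverse stereographic projection, cover it,
so its Hausdorff measure is finite.
-/

open Metric Module
open scoped ENNReal RealInnerProductSpace Pointwise

section HausdorffSphere

variable {E : Type*} [NormedAddCommGroup E] [InnerProductSpace ℝ E]

lemma ball_subset_image_orthogonalProjectionOnto_sphere {v : E} (hv : ‖v‖ = 1) :
    ball 0 1 ⊆ (ℝ ∙ v)ᗮ.orthogonalProjectionOnto '' sphere 0 1 := by
  intro y hy
  have hy1 : ‖y‖ ^ 2 < 1 := by
    rw [mem_ball_zero_iff] at hy
    exact pow_lt_one₀ (norm_nonneg y) hy two_ne_zero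
  have hvy : ⟪(y : E), v⟫ = 0 := Submodule.mem_orthogonal_singleton_iff_inner_left.1 y.2
  refine ⟨y + √(1 - ‖y‖ ^ 2) • v, ?_, ?_⟩
  · rw [mem_sphere_zero_iff_norm, ← sq_eq_sq₀ (norm_nonneg _) zero_le_one, norm_add_sq_real,
      inner_smul_right, hvy, norm_smul, hv, mul_one, Real.norm_eq_abs, sq_abs,
      Real.sq_sqrt (sub_nonneg.2 hy1.le), Submodule.coe_norm]
    ring
  · rw [map_add, map_smul, Submodule.orthogonalProjectionOnto_mem_subspace_eq_self,
      Submodule.orthogonalProjectionOnto_orthogonalComplement_singleton_eq_zero, smul_zero,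
      add_zero]

lemma sphere_inter_inner_nonpos_subset_image_stereoInvFunAux {v : E} (hv : ‖v‖ = 1) :
    sphere 0 1 ∩ {x | ⟪v, x⟫ ≤ 0} ⊆
      (stereoInvFunAux v ∘ ((↑) : (ℝ ∙ v)ᗮ → E)) '' closedBall 0 2 := by
  rintro x ⟨hx, hvx : ⟪v, x⟫ ≤ 0⟩
  have hxv : x ≠ v := by
    rintro rfl
    rw [real_inner_self_eq_norm_sq, hv] at hvx
    norm_num at hvx
  refine ⟨stereoToFun v x, ?_, congrArg Subtype.val (stereo_left_inv hv (x := ⟨x, hx⟩) hxv)⟩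
  rw [mem_closedBall_zero_iff, stereoToFun_apply, norm_smul, innerSL_apply_apply]
  have hproj : ‖(ℝ ∙ v)ᗮ.orthogonalProjectionOnto x‖ ≤ 1 :=
    (Submodule.norm_orthogonalProjectionOnto_apply_le _ x).trans_eq (mem_sphere_zero_iff_norm.1 hx)
  have hscale : ‖2 / (1 - ⟪v, x⟫)‖ ≤ 2 := by
    rw [Real.norm_of_nonneg (by apply div_nonneg <;> linarith)]
    exact div_le_self zero_le_two (by linarith)
  exact (mul_le_mul hscale hproj (norm_nonneg _) zero_le_two).trans_eq (mul_one 2)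

variable [FiniteDimensional ℝ E]

lemma cast_finrank_orthogonal_span_singleton {v : E} (hv : v ≠ 0) :
    (finrank ℝ (ℝ ∙ v)ᗮ : ℝ) = finrank ℝ E - 1 := by
  rw [eq_sub_iff_add_eq', ← Submodule.finrank_add_finrank_orthogonal (ℝ ∙ v),
    finrank_span_singleton hv]
  push_cast
  rfl

variable [MeasurableSpace E] [BorelSpace E]

lemma hausdorffMeasure_unitSphere_ne_zero [Nontrivial E] :
    μH[(finrank ℝ E : ℝ) - 1] (sphere (0 : E) 1) ≠ 0 := by
  obtain ⟨v, hv⟩ := exists_norm_eq E zero_le_one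
  rw [← cast_finrank_orthogonal_span_singleton (norm_ne_zero_iff.1 (hv.trans_ne one_ne_zero))]
  refine (lt_of_lt_of_le (measure_ball_pos μH[finrank ℝ (ℝ ∙ v)ᗮ] (0 : (ℝ ∙ v)ᗮ) one_pos) ?_).ne'
  calc μH[finrank ℝ (ℝ ∙ v)ᗮ] (ball (0 : (ℝ ∙ v)ᗮ) 1)
      ≤ μH[finrank ℝ (ℝ ∙ v)ᗮ] ((ℝ ∙ v)ᗮ.orthogonalProjectionOnto '' sphere 0 1) :=
        measure_mono (ball_subset_image_orthogonalProjectionOnto_sphere hv)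
    _ ≤ μH[finrank ℝ (ℝ ∙ v)ᗮ] (sphere (0 : E) 1) := by
        simpa using (Submodule.lipschitzWith_orthogonalProjectionOnto _).hausdorffMeasure_image_le
          (Nat.cast_nonneg _) (sphere (0 : E) 1)

lemma hausdorffMeasure_hemisphere_lt_top {v : E} (hv : ‖v‖ = 1) :
    μH[(finrank ℝ E : ℝ) - 1] (sphere 0 1 ∩ {x | ⟪v, x⟫ ≤ 0}) < ∞ := by
  have hsmooth : ContDiff ℝ 1 (stereoInvFunAux v ∘ ((↑) : (ℝ ∙ v)ᗮ → E)) :=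
    contDiff_stereoInvFunAux.comp (ℝ ∙ v)ᗮ.subtypeL.contDiff
  obtain ⟨K, hK⟩ := hsmooth.contDiffOn.exists_lipschitzOnWith one_ne_zero
    (convex_closedBall 0 2) (isCompact_closedBall 0 2)
  rw [← cast_finrank_orthogonal_span_singleton (norm_ne_zero_iff.1 (hv.trans_ne one_ne_zero))]
  calc μH[finrank ℝ (ℝ ∙ v)ᗮ] (sphere 0 1 ∩ {x | ⟪v, x⟫ ≤ 0})
      ≤ _ := measure_mono (sphere_inter_inner_nonpos_subset_image_stereoInvFunAux hv)
    _ ≤ K ^ (finrank ℝ (ℝ ∙ v)ᗮ : ℝ) * μH[finrank ℝ (ℝ ∙ v)ᗮ] (closedBall (0 : (ℝ ∙ v)ᗮ) 2) :=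
        hK.hausdorffMeasure_image_le (Nat.cast_nonneg _)
    _ < ∞ := ENNReal.mul_lt_top
        (ENNReal.rpow_lt_top_of_nonneg (Nat.cast_nonneg _) ENNReal.coe_ne_top)
        measure_closedBall_lt_top

lemma hausdorffMeasure_unitSphere_lt_top [Nontrivial E] :
    μH[(finrank ℝ E : ℝ) - 1] (sphere (0 : E) 1) < ∞ := by
  obtain ⟨v, hv⟩ := exists_norm_eq E zero_le_one
  have hcover : sphere (0 : E) 1 ⊆
      (sphere 0 1 ∩ {x | ⟪v, x⟫ ≤ 0}) ∪ (sphere 0 1 ∩ {x | ⟪-v, x⟫ ≤ 0}) := by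
    intro x hx
    simp only [inner_neg_left, neg_nonpos, ← Set.inter_union_distrib_left]
    exact ⟨hx, le_total ⟪v, x⟫ 0⟩
  exact (measure_mono hcover).trans_lt (measure_union_lt_top
    (hausdorffMeasure_hemisphere_lt_top hv)
    (hausdorffMeasure_hemisphere_lt_top ((norm_neg v).trans hv)))

lemma hausdorffMeasure_sphere [Nontrivial E] {r : ℝ} (hr : 0 < r) :
    μH[(finrank ℝ E : ℝ) - 1] (sphere (0 : E) r) =
      ‖r‖₊ ^ ((finrank ℝ E : ℝ) - 1) • μH[(finrank ℝ E : ℝ) - 1] (sphere (0 : E) 1) := by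
  have hd : (0 : ℝ) ≤ finrank ℝ E - 1 := sub_nonneg.2 (Nat.one_le_cast.2 finrank_pos)
  rw [← Measure.hausdorffMeasure_smul₀ hd hr.ne', smul_sphere' hr.ne', smul_zero,
    Real.norm_of_nonneg hr.le, mul_one]

lemma hausdorffMeasure_sphere_ne_zero [Nontrivial E] {r : ℝ} (hr : 0 < r) :
    μH[(finrank ℝ E : ℝ) - 1] (sphere (0 : E) r) ≠ 0 := by
  rw [hausdorffMeasure_sphere hr, ENNReal.smul_def, smul_eq_mul]
  exact mul_ne_zero (ENNReal.coe_ne_zero.2 (NNReal.rpow_pos (nnnorm_pos.2 hr.ne')).ne')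
    hausdorffMeasure_unitSphere_ne_zero

lemma hausdorffMeasure_sphere_lt_top [Nontrivial E] {r : ℝ} (hr : 0 < r) :
    μH[(finrank ℝ E : ℝ) - 1] (sphere (0 : E) r) < ∞ := by
  rw [hausdorffMeasure_sphere hr, ENNReal.smul_def, smul_eq_mul]
  exact ENNReal.mul_lt_top ENNReal.coe_lt_top hausdorffMeasure_unitSphere_lt_top

end HausdorffSphere

section RotationInvariant

variable {E : Type*} [NormedAddCommGroup E] [InnerProductSpace ℝ E] [MeasurableSpace E]

/-- Invariance of a measure under the full orthogonal group of `E`. Reflections are included, so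
that a single element exchanges any two given vectors of equal norm. -/
def IsRotationInvariant (μ : Measure E) : Prop :=
  ∀ R : E ≃ₗᵢ[ℝ] E, MeasurePreserving R μ μ

lemma IsRotationInvariant.smul {μ : Measure E} (hμ : IsRotationInvariant μ) (c : ℝ≥0∞) :
    IsRotationInvariant (c • μ) :=
  fun R => (hμ R).smul_measure c

variable [BorelSpace E]

lemma isRotationInvariant_hausdorffMeasure (d : ℝ) :
    IsRotationInvariant (μH[d] : Measure E) :=
  fun R => R.toIsometryEquiv.measurePreserving_hausdorffMeasure d

lemma isRotationInvariant_volume [FiniteDimensional ℝ E] :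
    IsRotationInvariant (volume : Measure E) :=
  fun R => R.measurePreserving

lemma integrable_abs_inner_rpow_prod [SecondCountableTopology E] {μ ν : Measure E} [SFinite ν]
    {p : ℝ} (hp : 0 ≤ p) (hμ : Integrable (‖·‖ ^ p) μ) (hν : Integrable (‖·‖ ^ p) ν) :
    Integrable (Function.uncurry fun x v : E => |⟪x, v⟫| ^ p) (μ.prod ν) := by
  refine (hμ.mul_prod hν).mono' ?_ (ae_of_all _ fun z => ?_)
  · exact ((by fun_prop : Continuous fun z : E × E => |⟪z.1, z.2⟫|).rpow_const
      fun _ => Or.inr hp).aestronglyMeasurable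
  · simp only [Function.uncurry]
    rw [Real.norm_of_nonneg (by positivity), ← Real.mul_rpow (norm_nonneg _) (norm_nonneg _)]
    exact Real.rpow_le_rpow (abs_nonneg _) (abs_real_inner_le_norm _ _) hp

namespace IsRotationInvariant

variable {μ ν : Measure E}

lemma restrict_sphere (hμ : IsRotationInvariant μ) (r : ℝ) :
    IsRotationInvariant (μ.restrict (sphere 0 r)) := by
  intro R
  have h := (hμ R).restrict_preimage (s := sphere 0 r) isClosed_sphere.measurableSet
  rwa [R.preimage_sphere, map_zero] at h

lemma withDensity_comp_norm (hμ : IsRotationInvariant μ) (f : ℝ → ℝ≥0∞) :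
    IsRotationInvariant (μ.withDensity fun x => f ‖x‖) := by
  intro R
  refine ⟨R.continuous.measurable, Measure.ext fun s hs => ?_⟩
  have h := (hμ R).setLIntegral_comp_preimage_emb R.toHomeomorph.measurableEmbedding
    (fun x => f ‖x‖) s
  simp only [LinearIsometryEquiv.norm_map] at h
  rw [Measure.map_apply R.continuous.measurable hs, withDensity_apply _ hs,
    withDensity_apply _ (R.continuous.measurable hs), h]

lemma integral_comp_inner_eq_of_norm_eq (hμ : IsRotationInvariant μ) {x y : E} (h : ‖x‖ = ‖y‖)
    (f : ℝ → ℝ) : ∫ v, f ⟪x, v⟫ ∂μ = ∫ v, f ⟪y, v⟫ ∂μ := by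
  let R := (ℝ ∙ (x - y))ᗮ.reflection
  have hR : R x = y := Submodule.reflection_sub h
  rw [← (hμ R).integral_comp R.toHomeomorph.measurableEmbedding (fun v => f ⟪y, v⟫), ← hR]
  simp only [LinearIsometryEquiv.inner_map_map]

lemma integral_abs_inner_rpow (hμ : IsRotationInvariant μ) {e : E} (he : ‖e‖ = 1) (x : E) (p : ℝ) :
    ∫ v, |⟪x, v⟫| ^ p ∂μ = ‖x‖ ^ p * ∫ v, |⟪e, v⟫| ^ p ∂μ := by
  have hx : ‖x‖ = ‖‖x‖ • e‖ := by rw [norm_smul, norm_norm, he, mul_one]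
  rw [hμ.integral_comp_inner_eq_of_norm_eq hx fun t => |t| ^ p, ← integral_const_mul]
  refine integral_congr_ae (ae_of_all μ fun v => ?_)
  simp only [inner_smul_left, conj_trivial, abs_mul, abs_norm]
  exact Real.mul_rpow (norm_nonneg x) (abs_nonneg _)

variable [SecondCountableTopology E] [SFinite μ] [SFinite ν] {p : ℝ}

lemma integral_norm_rpow_mul_integral_abs_inner_rpow_comm (hμ : IsRotationInvariant μ)
    (hν : IsRotationInvariant ν) (hp : 0 ≤ p) (hμp : Integrable (‖·‖ ^ p) μ)
    (hνp : Integrable (‖·‖ ^ p) ν) {e : E} (he : ‖e‖ = 1) :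
    (∫ x, ‖x‖ ^ p ∂μ) * ∫ v, |⟪e, v⟫| ^ p ∂ν = (∫ v, ‖v‖ ^ p ∂ν) * ∫ x, |⟪e, x⟫| ^ p ∂μ := by
  calc (∫ x, ‖x‖ ^ p ∂μ) * ∫ v, |⟪e, v⟫| ^ p ∂ν
      = ∫ x, ∫ v, |⟪x, v⟫| ^ p ∂ν ∂μ := by
        rw [← integral_mul_const]
        exact integral_congr_ae (ae_of_all _ fun x => (hν.integral_abs_inner_rpow he x p).symm)
    _ = ∫ v, ∫ x, |⟪v, x⟫| ^ p ∂μ ∂ν := by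
        rw [integral_integral_swap (integrable_abs_inner_rpow_prod hp hμp hνp)]
        simp only [real_inner_comm]
    _ = (∫ v, ‖v‖ ^ p ∂ν) * ∫ x, |⟪e, x⟫| ^ p ∂μ := by
        rw [← integral_mul_const]
        exact integral_congr_ae (ae_of_all _ fun v => hμ.integral_abs_inner_rpow he v p)

end IsRotationInvariant

end RotationInvariant

section GaussianMoments

lemma integral_abs_rpow_mul_exp_neg_sq {p : ℝ} (hp : -1 < p) :
    ∫ t : ℝ, |t| ^ p * Real.exp (-t ^ 2) = Real.Gamma ((p + 1) / 2) := by
  have h := integral_rpow_mul_exp_neg_rpow zero_lt_two hp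
  simp only [Real.rpow_two] at h
  have habs := integral_comp_abs (f := fun t : ℝ => t ^ p * Real.exp (-t ^ 2))
  simp only [sq_abs] at habs
  rw [habs, h]
  ring

lemma pow_smul_rpow_mul {d : ℕ} (hd : 0 < d) (p a : ℝ) {t : ℝ} (ht : 0 < t) :
    t ^ (d - 1) • (t ^ p * a) = t ^ ((d : ℝ) - 1 + p) * a := by
  rw [smul_eq_mul, ← mul_assoc, ← Real.rpow_natCast, ← Real.rpow_add ht, Nat.cast_pred hd]

section InnerProductSpace

variable {E : Type*} [NormedAddCommGroup E] [InnerProductSpace ℝ E] [FiniteDimensional ℝ E]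
  [Nontrivial E] [MeasurableSpace E] [BorelSpace E] {p : ℝ}

lemma integrable_norm_rpow_mul_exp_neg_norm_sq (hp : -finrank ℝ E < p) :
    Integrable fun x : E => ‖x‖ ^ p * Real.exp (-‖x‖ ^ 2) := by
  rw [integrable_fun_norm_addHaar volume (f := fun t : ℝ => t ^ p * Real.exp (-t ^ 2))]
  have h := integrableOn_rpow_mul_exp_neg_rpow (s := finrank ℝ E - 1 + p) (by linarith) zero_lt_two
  simp only [Real.rpow_two] at h
  exact h.congr_fun (fun t ht => (pow_smul_rpow_mul finrank_pos p _ ht).symm) measurableSet_Ioi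

lemma integral_norm_rpow_mul_exp_neg_norm_sq (hp : -finrank ℝ E < p) :
    ∫ x : E, ‖x‖ ^ p * Real.exp (-‖x‖ ^ 2) =
      √Real.pi ^ finrank ℝ E * Real.Gamma ((finrank ℝ E + p) / 2) /
        Real.Gamma (finrank ℝ E / 2) := by
  have hd : (0 : ℝ) < finrank ℝ E := Nat.cast_pos.2 finrank_pos
  have hradial : ∫ t in Set.Ioi (0 : ℝ), t ^ (finrank ℝ E - 1) • (t ^ p * Real.exp (-t ^ 2)) =
      Real.Gamma ((finrank ℝ E + p) / 2) / 2 := by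
    have h := integral_rpow_mul_exp_neg_rpow (q := finrank ℝ E - 1 + p) zero_lt_two (by linarith)
    simp only [Real.rpow_two] at h
    rw [setIntegral_congr_fun measurableSet_Ioi fun t ht => pow_smul_rpow_mul finrank_pos p _ ht,
      h]
    ring_nf
  have hball : volume.real (ball (0 : E) 1) =
      √Real.pi ^ finrank ℝ E / (finrank ℝ E / 2 * Real.Gamma (finrank ℝ E / 2)) := by
    rw [measureReal_def, InnerProductSpace.volume_ball, ENNReal.ofReal_one, one_pow, one_mul,
      Real.Gamma_add_one (by positivity), ENNReal.toReal_ofReal (by positivity)]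
  have hΓ : Real.Gamma (finrank ℝ E / 2) ≠ 0 := (Real.Gamma_pos_of_pos (by positivity)).ne'
  rw [integral_fun_norm_addHaar volume fun t : ℝ => t ^ p * Real.exp (-t ^ 2), hradial, hball,
    nsmul_eq_mul, smul_eq_mul]
  field_simp

end InnerProductSpace

lemma integral_abs_coord_rpow_mul_exp_neg_norm_sq {ι : Type*} [Fintype ι] {p : ℝ} (hp : -1 < p)
    (i : ι) :
    ∫ x : EuclideanSpace ℝ ι, |x i| ^ p * Real.exp (-‖x‖ ^ 2) =
      Real.Gamma ((p + 1) / 2) * √Real.pi ^ (Fintype.card ι - 1) := by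
  classical
  let f : ι → ℝ → ℝ := fun j t => (if j = i then |t| ^ p else 1) * Real.exp (-t ^ 2)
  have hfactor (x : EuclideanSpace ℝ ι) :
      |x i| ^ p * Real.exp (-‖x‖ ^ 2) = ∏ j, f j (x j) := by
    simp only [f, Finset.prod_mul_distrib, Finset.prod_ite_eq', Finset.mem_univ, if_true,
      ← Real.exp_sum, Finset.sum_neg_distrib, EuclideanSpace.real_norm_sq_eq]
  have hi : ∫ t, f i t = Real.Gamma ((p + 1) / 2) := by
    simp only [f, if_true, integral_abs_rpow_mul_exp_neg_sq hp]
  have hne : ∀ j ∈ Finset.univ.erase i, ∫ t, f j t = √Real.pi := by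
    intro j hj
    simpa [f, Finset.ne_of_mem_erase hj] using integral_gaussian 1
  calc ∫ x : EuclideanSpace ℝ ι, |x i| ^ p * Real.exp (-‖x‖ ^ 2)
      = ∫ x : EuclideanSpace ℝ ι, ∏ j, f j (x j) := integral_congr_ae (ae_of_all _ hfactor)
    _ = ∫ y : ι → ℝ, ∏ j, f j (y j) :=
        (EuclideanSpace.volume_preserving_symm_measurableEquiv_toLp ι).integral_comp'
          fun y => ∏ j, f j (y j)
    _ = ∏ j, ∫ t, f j t := integral_fintype_prod_volume_eq_prod f
    _ = Real.Gamma ((p + 1) / 2) * √Real.pi ^ (Fintype.card ι - 1) := by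
        rw [← Finset.mul_prod_erase _ _ (Finset.mem_univ i), hi, Finset.prod_congr rfl hne,
          Finset.prod_const, Finset.card_erase_of_mem (Finset.mem_univ i), Finset.card_univ]

/-- The unnormalised Gaussian measure with density `exp (-‖x‖ ^ 2)`, the reference
rotation-invariant measure whose moments are explicit. -/
noncomputable def gaussianWeight (ι : Type*) [Fintype ι] : Measure (EuclideanSpace ℝ ι) :=
  volume.withDensity fun x => ENNReal.ofReal (Real.exp (-‖x‖ ^ 2))

variable {ι : Type*} [Fintype ι]

instance : SFinite (gaussianWeight ι) := by
  unfold gaussianWeight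
  infer_instance

lemma isRotationInvariant_gaussianWeight : IsRotationInvariant (gaussianWeight ι) :=
  isRotationInvariant_volume.withDensity_comp_norm fun t => ENNReal.ofReal (Real.exp (-t ^ 2))

lemma integrable_gaussianWeight_iff {f : EuclideanSpace ℝ ι → ℝ} :
    Integrable f (gaussianWeight ι) ↔ Integrable fun x => f x * Real.exp (-‖x‖ ^ 2) := by
  rw [gaussianWeight, integrable_withDensity_iff (by fun_prop) (by simp)]
  simp only [ENNReal.toReal_ofReal (Real.exp_nonneg _)]

lemma integral_gaussianWeight (f : EuclideanSpace ℝ ι → ℝ) :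
    ∫ x, f x ∂gaussianWeight ι = ∫ x, f x * Real.exp (-‖x‖ ^ 2) := by
  rw [gaussianWeight, integral_withDensity_eq_integral_toReal_smul (by fun_prop) (by simp)]
  simp only [ENNReal.toReal_ofReal (Real.exp_nonneg _), smul_eq_mul, mul_comm]

end GaussianMoments

section SphereMoments

lemma integrable_of_ae_norm_eq {E : Type*} [NormedAddCommGroup E] [ProperSpace E]
    [MeasurableSpace E] [BorelSpace E] {σ : Measure E} [IsFiniteMeasure σ] {r : ℝ}
    (hσ : ∀ᵐ v ∂σ, ‖v‖ = r) {f : E → ℝ} (hf : Continuous f) : Integrable f σ := by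
  have hres : σ.restrict (sphere 0 r) = σ :=
    Measure.restrict_eq_self_of_ae_mem (hσ.mono fun v hv => mem_sphere_zero_iff_norm.2 hv)
  rw [← hres]
  exact hf.continuousOn.integrableOn_compact (isCompact_sphere 0 r)

variable {ι : Type*} [Fintype ι] {σ : Measure (EuclideanSpace ℝ ι)} [IsProbabilityMeasure σ]
  {r : ℝ}

lemma IsRotationInvariant.integral_abs_coord_rpow (hσ : IsRotationInvariant σ)
    (hr : ∀ᵐ v ∂σ, ‖v‖ = r) {p : ℝ} (hp : 0 ≤ p) (i : ι) :
    ∫ v, |v i| ^ p ∂σ =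
      r ^ p * (Real.Gamma ((p + 1) / 2) * Real.Gamma (Fintype.card ι / 2) /
        (√Real.pi * Real.Gamma ((Fintype.card ι + p) / 2))) := by
  classical
  have : Nonempty ι := ⟨i⟩
  have hn : (0 : ℝ) < Fintype.card ι := Nat.cast_pos.2 Fintype.card_pos
  have hp' : -(finrank ℝ (EuclideanSpace ℝ ι) : ℝ) < p := by
    rw [finrank_euclideanSpace]
    linarith
  have hgauss : Integrable (‖·‖ ^ p) (gaussianWeight ι) :=
    integrable_gaussianWeight_iff.2 (integrable_norm_rpow_mul_exp_neg_norm_sq hp')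
  have hsphere : Integrable (‖·‖ ^ p) σ :=
    integrable_of_ae_norm_eq hr (continuous_norm.rpow_const fun _ => Or.inr hp)
  have hrp : ∫ v, ‖v‖ ^ p ∂σ = r ^ p := by
    rw [integral_congr_ae (hr.mono fun v hv => congrArg (· ^ p) hv), integral_const, probReal_univ,
      one_smul]
  have key :=
    isRotationInvariant_gaussianWeight.integral_norm_rpow_mul_integral_abs_inner_rpow_comm hσ hp
      hgauss hsphere (e := EuclideanSpace.single i 1) (by simp)
  simp only [EuclideanSpace.inner_single_left, map_one, one_mul] at key
  rw [hrp, integral_gaussianWeight, integral_gaussianWeight,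
    integral_norm_rpow_mul_exp_neg_norm_sq hp', finrank_euclideanSpace,
    integral_abs_coord_rpow_mul_exp_neg_norm_sq (by linarith)] at key
  have hπ : √Real.pi ^ Fintype.card ι = √Real.pi ^ (Fintype.card ι - 1) * √Real.pi :=
    (pow_sub_one_mul Fintype.card_ne_zero _).symm
  have hΓn : 0 < Real.Gamma (Fintype.card ι / 2) := Real.Gamma_pos_of_pos (by positivity)
  have hΓnp : 0 < Real.Gamma ((Fintype.card ι + p) / 2) := Real.Gamma_pos_of_pos (by positivity)
  rw [hπ] at key
  field_simp at key ⊢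
  linarith

lemma Gamma_add_one_div_two_mul_Gamma_div_two {n : ℕ} (hn : n ≠ 0) :
    Real.Gamma ((n + 1) / 2) * Real.Gamma (n / 2) = Real.Gamma n * √Real.pi / 2 ^ (n - 1) := by
  have h := Real.Gamma_mul_Gamma_add_half (n / 2)
  rw [← add_div, mul_div_cancel₀ _ two_ne_zero] at h
  have hpow : (2 : ℝ) ^ (1 - (n : ℝ)) = (2 ^ (n - 1))⁻¹ := by
    rw [← neg_sub, Real.rpow_neg zero_le_two, ← Nat.cast_pred (Nat.pos_of_ne_zero hn),
      Real.rpow_natCast]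
  rw [mul_comm, h, hpow]
  ring

lemma IsRotationInvariant.integral_abs_coord_pow_card (hσ : IsRotationInvariant σ)
    (hr : ∀ᵐ v ∂σ, ‖v‖ = r) (i : ι) :
    ∫ v, |v i| ^ Fintype.card ι ∂σ = r ^ Fintype.card ι / 2 ^ (Fintype.card ι - 1) := by
  have hn : Fintype.card ι ≠ 0 := (Fintype.card_pos_iff.2 ⟨i⟩).ne'
  have h := hσ.integral_abs_coord_rpow hr (Nat.cast_nonneg (Fintype.card ι)) i
  rw [add_self_div_two, Gamma_add_one_div_two_mul_Gamma_div_two hn] at h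
  simp only [Real.rpow_natCast] at h
  rw [h]
  field_simp

end SphereMoments

section UniformSphere

variable {N : ℕ} {r : ℝ}

lemma ae_norm_eq_uniformSphere : ∀ᵐ v ∂uniformSphere N r, ‖v‖ = r :=
  Measure.ae_smul_measure ((ae_restrict_mem isClosed_sphere.measurableSet).mono
    fun _ hv => mem_sphere_zero_iff_norm.1 hv) _

lemma isRotationInvariant_uniformSphere : IsRotationInvariant (uniformSphere N r) :=
  ((isRotationInvariant_hausdorffMeasure _).restrict_sphere r).smul _

lemma isProbabilityMeasure_uniformSphere (hN : N ≠ 0) (hr : 0 < r) :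
    IsProbabilityMeasure (uniformSphere N r) := by
  have : NeZero N := ⟨hN⟩
  have hne := hausdorffMeasure_sphere_ne_zero (E := EuclideanSpace ℝ (Fin N)) hr
  have hfin := hausdorffMeasure_sphere_lt_top (E := EuclideanSpace ℝ (Fin N)) hr
  rw [finrank_euclideanSpace_fin] at hne hfin
  constructor
  rw [uniformSphere, Measure.smul_apply, Measure.restrict_apply_univ, smul_eq_mul]
  exact ENNReal.inv_mul_cancel hne hfin.ne

lemma integral_sum_abs_pow_uniformSphere (hN : N ≠ 0) (hr : 0 < r) :
    ∫ v, ∑ i, |v i| ^ N ∂uniformSphere N r = N * (r ^ N / 2 ^ (N - 1)) := by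
  have := isProbabilityMeasure_uniformSphere hN hr
  have hmoment (i : Fin N) : ∫ v, |v i| ^ N ∂uniformSphere N r = r ^ N / 2 ^ (N - 1) := by
    simpa only [Fintype.card_fin] using
      isRotationInvariant_uniformSphere.integral_abs_coord_pow_card ae_norm_eq_uniformSphere i
  rw [integral_finsetSum _ fun i _ => integrable_of_ae_norm_eq ae_norm_eq_uniformSphere
    (by fun_prop)]
  simp only [hmoment, Finset.sum_const, Finset.card_univ, Fintype.card_fin, nsmul_eq_mul]

end UniformSphere

lemma natCast_rpow_add_two_div_two (n : ℕ) : (n : ℝ) ^ (((n : ℝ) + 2) / 2) = n * √n ^ n := by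
  rw [add_div, div_self two_ne_zero, Real.rpow_add_one' n.cast_nonneg (by positivity), mul_comm,
    Real.rpow_div_two_eq_sqrt _ n.cast_nonneg, Real.rpow_natCast]

/-- `F_N(v) = (Σ_i |v_i|^N)·2^{N−1}/N^{(N+2)/2}` is a symmetric probability density on
`S^{N−1}(√N)`. -/
theorem varying_polynomial_is_symmetric_density (N : ℕ) (hN : 2 ≤ N) :
    (∫ v, (∑ i, |v i| ^ (N : ℕ)) * 2 ^ (N - 1) / (N : ℝ) ^ (((N : ℝ) + 2) / 2)
        ∂(uniformSphere N (Real.sqrt N)) = 1) ∧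
      (∀ (τ : Equiv.Perm (Fin N)) (v : EuclideanSpace ℝ (Fin N)),
        (∑ i, |(fun j => v (τ j)) i| ^ (N : ℕ)) * 2 ^ (N - 1) /
            (N : ℝ) ^ (((N : ℝ) + 2) / 2) =
          (∑ i, |v i| ^ (N : ℕ)) * 2 ^ (N - 1) / (N : ℝ) ^ (((N : ℝ) + 2) / 2)) := by
  have hN0 : N ≠ 0 := by omega
  have hr : 0 < √(N : ℝ) := by positivity
  refine ⟨?_, fun τ v => ?_⟩
  · rw [integral_div, integral_mul_const, integral_sum_abs_pow_uniformSphere hN0 hr,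
      natCast_rpow_add_two_div_two N]
    field_simp
  · rw [Equiv.sum_comp τ fun i => |v i| ^ N]
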